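/- Let x_{n−1} ≺ … ≺ x_1 ≺ y_{n−1} ≺ … ≺ y_1 ≺ z_{n−1} ≺ … ≺ z_1 ≺ t_{n−1} ≺ … ≺ t_1 be pairwise distinct points of P ordered anticlockwise on the circle. Then for all a, b ∈ {0, 1, …, n−1}, {E(x^a, z^{n−a−1} | y_1, t_1), E(x^b, z^{n−b−1} | y_1, t_1)} = 0 in Q_n(P); in particular, the images A_i = E(x^i, z^{n−i−1} | t_1, y_1) · E(x^{i−1}, z^{n−i} | y_1, t_1) (1 ≤ i ≤ n−1) of the edge functions attached to one fixed edge xz pairwise Poisson-commute. -/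

import Mathlib

noncomputable section

open scoped Classical
open MvPolynomial

set_option maxHeartbeats 1000000
set_option synthInstance.maxHeartbeats 400000

instance fact01 : Fact ((0:ℝ) < 1) := ⟨one_pos⟩

/-- The circle, modelled as `ℝ/ℤ`. -/
abbrev Circle1 : Type := AddCircle (1:ℝ)

/-- The coordinate in `[0,1)` of the point `x` of the circle obtained after removing the
point `o` and identifying the complement of `o` with an interval. -/
def coordAt (o x : Circle1) : ℝ := ((AddCircle.equivIco 1 0) (x - o) : ℝ)

/-- The sign `△` of a real number, as a rational number in `{-1, 0, 1}`. -/
def sgnQ (a : ℝ) : ℚ := if a < 0 then -1 else if a = 0 then 0 else 1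

/-- The linking number `J(rx, sy)` of the chords `rx` and `sy`, computed using the
cut point `o`. -/
def linkingAt (o r x s y : Circle1) : ℚ :=
  (1/2) * (sgnQ (coordAt o r - coordAt o x) * sgnQ (coordAt o r - coordAt o y)
        * sgnQ (coordAt o y - coordAt o x)
      - sgnQ (coordAt o r - coordAt o x) * sgnQ (coordAt o r - coordAt o s)
        * sgnQ (coordAt o s - coordAt o x))

lemma circle1_infinite : Infinite Circle1 := by
  have h : (Set.Ico (0:ℝ) (0+1)).Infinite := Set.Ico_infinite (by norm_num)
  haveI := h.to_subtype
  exact Infinite.of_injective (fun q : Set.Ico (0:ℝ) (0+1) => (AddCircle.equivIco 1 0).symm q)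
    ((AddCircle.equivIco 1 0).symm.injective)

lemma exists_cut (r x s y : Circle1) :
    ∃ o : Circle1, o ≠ r ∧ o ≠ x ∧ o ≠ s ∧ o ≠ y := by
  haveI : Infinite Circle1 := circle1_infinite
  have hfin : ({r, x, s, y} : Set Circle1).Finite :=
    (((Set.finite_singleton y).insert s).insert x).insert r
  obtain ⟨o, ho⟩ := hfin.infinite_compl.nonempty
  simp only [Set.mem_compl_iff, Set.mem_insert_iff, Set.mem_singleton_iff, not_or] at ho
  exact ⟨o, ho.1, ho.2.1, ho.2.2.1, ho.2.2.2⟩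

/-- The linking number `J(rx, sy)` of the chords `rx` and `sy` (computed with respect to
some cut point distinct from the four points; by the independence of the choice this is
the linking number). -/
def linkQ (r x s y : Circle1) : ℚ := linkingAt (exists_cut r x s y).choose r x s y

/-- The set of points of the circle `l`, listed in anticlockwise (cyclic) order:
there is a cut point `o` avoiding them such that the induced coordinates are
strictly increasing along the list. -/
def AnticlockwiseList (l : List Circle1) : Prop :=
  ∃ o : Circle1, (∀ p ∈ l, p ≠ o) ∧ (l.map (coordAt o)).Chain' (· < ·)

/-- Index type for the generators `xy` of the swapping ring of `P`
(one generator for each ordered pair of distinct points; the generators `xx`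
are identified with `0`). -/
abbrev SwapIdx (P : Set Circle1) : Type := {q : (↥P) × (↥P) // q.1 ≠ q.2}

/-- The swapping ring `Z(P)`: the polynomial ring over `K` on the generators `xy`,
`x ≠ y ∈ P` (this realizes the commutative ring generated by all ordered pairs `xy`
subject to the relations `xx = 0`). -/
abbrev SwapRing (K : Type) [Field K] (P : Set Circle1) : Type := MvPolynomial (SwapIdx P) K

/-- The generator `xy` of the swapping ring (equal to `0` when `x = y`). -/
def gen (K : Type) [Field K] (P : Set Circle1) (x y : ↥P) : SwapRing K P :=
  if h : x ≠ y then MvPolynomial.X (⟨(x, y), h⟩ : SwapIdx P) else 0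

/-- The value of the `(c1,c2)`-swapping bracket on two generators `rx` and `sy`:
`J(rx,sy) • (c1 • ry·sx + c2 • rx·sy)`. -/
def genBr (K : Type) [Field K] (P : Set Circle1) (c1 c2 : K) (g g' : SwapIdx P) :
    SwapRing K P :=
  ((linkQ g.1.1.1 g.1.2.1 g'.1.1.1 g'.1.2.1 : ℚ) : K) •
    (c1 • (gen K P g.1.1 g'.1.2 * gen K P g'.1.1 g.1.2)
      + c2 • (gen K P g.1.1 g.1.2 * gen K P g'.1.1 g'.1.2))

/-- The `(c1,c2)`-swapping bracket on `Z(P)`: the biderivation extending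
`{rx, sy} = J(rx,sy)·(c1·ry·sx + c2·rx·sy)` by the Leibniz rule in each argument.
The swapping bracket is the case `c1 = 1, c2 = 0`. -/
def swapBr (K : Type) [Field K] (P : Set Circle1) (c1 c2 : K) (a b : SwapRing K P) :
    SwapRing K P :=
  (MvPolynomial.mkDerivation K
    (fun g : SwapIdx P => (MvPolynomial.mkDerivation K (genBr K P c1 c2 g)) b)) a

/-- `Δ((x_1,…,x_m),(y_1,…,y_m)) = det (x_i y_j)` in the swapping ring. -/
def Dmat (K : Type) [Field K] (P : Set Circle1) (m : ℕ) (xs ys : Fin m → ↥P) :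
    SwapRing K P :=
  Matrix.det (Matrix.of fun i j => gen K P (xs i) (ys j))

/-- The ideal `R_n(P)` of `Z(P)` generated by all `(n+1)×(n+1)` determinants
`Δ((x_1,…,x_{n+1}),(y_1,…,y_{n+1}))`. -/
def Rideal (K : Type) [Field K] (P : Set Circle1) (n : ℕ) : Ideal (SwapRing K P) :=
  Ideal.span {D : SwapRing K P | ∃ xs ys : Fin (n+1) → ↥P, D = Dmat K P (n+1) xs ys}

/-- The rank `n` swapping ring `Z_n(P) = Z(P)/R_n(P)`. -/
abbrev ZnRing (K : Type) [Field K] (P : Set Circle1) (n : ℕ) : Type :=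
  SwapRing K P ⧸ Rideal K P n

/-- The quotient map `Z(P) → Z_n(P)`. -/
def toZn (K : Type) [Field K] (P : Set Circle1) (n : ℕ) :
    SwapRing K P →+* ZnRing K P n := Ideal.Quotient.mk (Rideal K P n)

/-- The total fraction ring `Q_n(P)` of the rank `n` swapping ring. -/
abbrev QnRing (K : Type) [Field K] (P : Set Circle1) (n : ℕ) : Type :=
  Localization (nonZeroDivisors (ZnRing K P n))

/-- The canonical map `Z(P) → Q_n(P)`. -/
def toQn (K : Type) [Field K] (P : Set Circle1) (n : ℕ) :
    SwapRing K P →+* QnRing K P n :=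
  (algebraMap (ZnRing K P n) (QnRing K P n)).comp (toZn K P n)

/-- `Bq` is the extension to the total fraction ring `Q_n(P)` of the `(c1,c2)`-swapping
bracket of the rank `n` swapping algebra: it agrees with the swapping bracket on the image
of `Z(P)` and satisfies the Leibniz rule in both arguments (these properties determine it
uniquely). -/
def IsQnBracket (K : Type) [Field K] (P : Set Circle1) (n : ℕ) (c1 c2 : K)
    (Bq : QnRing K P n → QnRing K P n → QnRing K P n) : Prop :=
  (∀ a b : SwapRing K P,
      Bq (toQn K P n a) (toQn K P n b) = toQn K P n (swapBr K P c1 c2 a b)) ∧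
  (∀ a b c : QnRing K P n, Bq (a * b) c = a * Bq b c + b * Bq a c) ∧
  (∀ a b c : QnRing K P n, Bq a (b * c) = b * Bq a c + c * Bq a b)

/-- The `n`-tuple `(x_1, …, x_a, y_1, …, y_b, z_1, …, z_{n-a-b})` built from three
families of points (families are indexed from `0`, i.e. `x 0 = x_1`). -/
def rows3 {α : Type*} {n : ℕ} (x y z : ℕ → α) (a b : ℕ) : Fin n → α :=
  fun i => if (i : ℕ) < a then x (i : ℕ)
    else if (i : ℕ) < a + b then y ((i : ℕ) - a)
    else z ((i : ℕ) - (a + b))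

/-- The `n`-tuple `(x_1, …, x_a, y_1, …, y_b, z_1, …, z_{n-1-a-b}, w)` built from three
families of points and a final point `w`. -/
def rows3s {α : Type*} {n : ℕ} (x y z : ℕ → α) (a b : ℕ) (w : α) : Fin n → α :=
  fun i => if (i : ℕ) < a then x (i : ℕ)
    else if (i : ℕ) < a + b then y ((i : ℕ) - a)
    else if (i : ℕ) < n - 1 then z ((i : ℕ) - (a + b))
    else w

/-- The `n`-tuple `(x_1, …, x_{n-1}, t)`. -/
def snocTup {α : Type*} {n : ℕ} (x : ℕ → α) (t : α) : Fin n → α :=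
  fun i => if (i : ℕ) < n - 1 then x (i : ℕ) else t

/-- The list `f_a, f_{a-1}, …, f_1` (descending enumeration). -/
def descPts (f : ℕ → Circle1) (a : ℕ) : List Circle1 := ((List.range a).map f).reverse

/-- The list `f_1, f_2, …, f_a` (ascending enumeration). -/
def ascPts (f : ℕ → Circle1) (a : ℕ) : List Circle1 := (List.range a).map f

/-- The `(n×n)`-determinant quotient `Δ(numR, v)/Δ(denR, v)` as an element of the total
fraction ring `Q_n(P)`. -/
def EQuot (K : Type) [Field K] (P : Set Circle1) (n : ℕ)
    (numR denR v : Fin n → ↥P)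
    (h : toZn K P n (Dmat K P n denR v) ∈ nonZeroDivisors (ZnRing K P n)) :
    QnRing K P n :=
  Localization.mk (toZn K P n (Dmat K P n numR v)) ⟨toZn K P n (Dmat K P n denR v), h⟩


/-- The image under the homomorphism `θ` of the `(i, n-i)`-edge function of the edge `xz`
of the quadrilateral `x y z t` (with `t1 = t_1` and `y1 = y_1`):
`E(x^i, z^{n-i-1} | t_1, y_1) · E(x^{i-1}, z^{n-i} | y_1, t_1)`,
computed with the right-side `n`-tuple `v`. -/
def edgeQuot (K : Type) [Field K] (P : Set Circle1) (n : ℕ) (x z : ℕ → ↥P)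
    (t1 y1 : ↥P) (i : ℕ) (v : Fin n → ↥P)
    (h1 : toZn K P n (Dmat K P n (rows3s x z x i (n-i-1) y1) v)
          ∈ nonZeroDivisors (ZnRing K P n))
    (h2 : toZn K P n (Dmat K P n (rows3s x z x (i-1) (n-i) t1) v)
          ∈ nonZeroDivisors (ZnRing K P n)) : QnRing K P n :=
  EQuot K P n (rows3s x z x i (n-i-1) t1) (rows3s x z x i (n-i-1) y1) v h1
    * EQuot K P n (rows3s x z x (i-1) (n-i) y1) (rows3s x z x (i-1) (n-i) t1) v h2

/-!
The linking number of two chords is a sum of four signs, one for each pair of end points of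
different chords. Hence the bracket of `Δ(R, v)` and `Δ(S, v)` is the sum of two terms
`u(R) * Δ(S, v)` and `-Δ(R, v) * u(S)`, which compare the points of `R` or of `S` with those of
`v`, and of a sum over the exchanges of a point `R i` with a point `S k`, weighted by their
relative position. An exchange that creates a repeated point contributes zero.

For `R = (x^a, z^{n-a-1}, w)` and `S = (x^b, z^{n-b-1}, w')` with `a ≤ b` and `w, w' ∈ {y_1, t_1}`,
the weight of each remaining exchange depends on `k` only. By Cramer's rule the exchange sum is
then `(c + p(w') - p(w)) * Δ(R, v) * Δ(S, v)`, with `c` independent of `w` and `w'`. So the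
bracket of `Δ(R, v)` and `Δ(S, v)`, divided by their product, is a function of `w` plus a function
of `w'`, and such a sum cancels in the bracket of two determinant quotients.
-/

section MatrixIdentities

variable {ι A : Type*} [Fintype ι] [DecidableEq ι] [CommRing A]

lemma derivation_prod {R M κ : Type*} [CommSemiring R] [Algebra R A] [AddCommGroup M]
    [Module R M] [Module A M] [DecidableEq κ] (D : Derivation R A M) (s : Finset κ) (f : κ → A) :
    D (∏ i ∈ s, f i) = ∑ i ∈ s, (∏ j ∈ s.erase i, f j) • D (f i) := by
  induction s using Finset.induction_on with
  | empty => simp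
  | insert a s ha ih =>
    rw [Finset.prod_insert ha, D.leibniz, ih, Finset.sum_insert ha, Finset.erase_insert ha,
      add_comm, Finset.smul_sum]
    congr 1
    refine Finset.sum_congr rfl fun i hi => ?_
    have hai : a ≠ i := fun h => ha (h ▸ hi)
    rw [Finset.erase_insert_of_ne hai, Finset.prod_insert (fun h => ha (Finset.mem_of_mem_erase h)),
      mul_smul]

lemma det_updateCol_eq_sum_adjugate (M : Matrix ι ι A) (j : ι) (w : ι → A) :
    (M.updateCol j w).det = ∑ i, M.adjugate j i * w i := by
  rw [← Matrix.cramer_apply, Matrix.cramer_eq_adjugate_mulVec]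
  rfl

lemma derivation_det {R : Type*} [CommRing R] [Algebra R A] (D : Derivation R A A)
    (M : Matrix ι ι A) :
    D M.det = ∑ i, ∑ j, M.adjugate j i * D (M i j) := by
  have derivation_term (σ : Equiv.Perm ι) : D (Equiv.Perm.sign σ • ∏ i, M (σ i) i)
      = ∑ j, Equiv.Perm.sign σ • ∏ i, M.updateCol j (fun i => D (M i j)) (σ i) i := by
    rw [Units.smul_def, map_zsmul, derivation_prod, Finset.smul_sum]
    refine Finset.sum_congr rfl fun j _ => ?_
    rw [← Finset.mul_prod_erase _ _ (Finset.mem_univ j), Matrix.updateCol_self, smul_eq_mul,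
      mul_comm, Units.smul_def]
    congr 2
    exact Finset.prod_congr rfl fun i hi => (Matrix.updateCol_ne (Finset.ne_of_mem_erase hi)).symm
  calc D M.det
      = ∑ j, (M.updateCol j fun i => D (M i j)).det := by
        simp only [Matrix.det_apply, map_sum, derivation_term]
        exact Finset.sum_comm
    _ = ∑ i, ∑ j, M.adjugate j i * D (M i j) := by
        simp only [det_updateCol_eq_sum_adjugate]
        exact Finset.sum_comm

lemma mul_adjugate_apply_eq_zero {M N : Matrix ι ι A} {i i' k : ι} (hi : i' ≠ i)
    (hrow : N k = M i') : (N * M.adjugate) k i = 0 := by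
  rw [Matrix.mul_apply, hrow, ← Matrix.mul_apply, Matrix.mul_adjugate, Matrix.smul_apply,
    Matrix.one_apply_ne hi, smul_zero]

lemma sum_mul_adjugate_mul_mul_adjugate (M N : Matrix ι ι A) (k : ι) :
    ∑ i, (N * M.adjugate) k i * (M * N.adjugate) i k = M.det * N.det := by
  rw [← Matrix.mul_apply, Matrix.mul_assoc, ← Matrix.mul_assoc M.adjugate, Matrix.adjugate_mul]
  simp [Matrix.mul_adjugate]

lemma sum_adjugate_mul_weight (N : Matrix ι ι A) (m : ι → A) (j : ι) (a b : ι → A) :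
    ∑ k, ∑ l, N.adjugate l k * ((a k + b l) * (m l * N k j))
      = ∑ k, a k * N k j * Matrix.vecMul m N.adjugate k + b j * m j * N.det := by
  have row_part : ∑ k, ∑ l, N.adjugate l k * (a k * (m l * N k j))
      = ∑ k, a k * N k j * Matrix.vecMul m N.adjugate k := by
    refine Finset.sum_congr rfl fun k _ => ?_
    rw [Matrix.vecMul, dotProduct, Finset.mul_sum]
    exact Finset.sum_congr rfl fun l _ => by ring
  have column_part : ∑ k, ∑ l, N.adjugate l k * (b l * (m l * N k j)) = b j * m j * N.det := by
    calc ∑ k, ∑ l, N.adjugate l k * (b l * (m l * N k j))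
        = ∑ l, b l * m l * (N.adjugate * N) l j := by
          rw [Finset.sum_comm]
          simp only [Matrix.mul_apply, Finset.mul_sum]
          exact Finset.sum_congr rfl fun l _ => Finset.sum_congr rfl fun k _ => by ring
      _ = b j * m j * N.det := by simp [Matrix.adjugate_mul, Matrix.one_apply]
  rw [← row_part, ← column_part, ← Finset.sum_add_distrib]
  simp only [← Finset.sum_add_distrib, add_mul, mul_add]

lemma sum_adjugate_mul_exchange (M N : Matrix ι ι A) (α δ γ : ι → ι → A) :
    ∑ i, ∑ j, M.adjugate j i *
        (∑ k, (α i k + δ k j) * N k j * (M * N.adjugate) i k + γ i j * M i j * N.det)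
      = ∑ i, ∑ k, α i k * ((N * M.adjugate) k i * (M * N.adjugate) i k)
        + M.det * ∑ k, ∑ j, δ k j * (N.adjugate j k * N k j)
        + N.det * ∑ i, ∑ j, γ i j * (M.adjugate j i * M i j) := by
  have row_row_part : ∑ i, ∑ j, ∑ k, M.adjugate j i * (α i k * N k j * (M * N.adjugate) i k)
      = ∑ i, ∑ k, α i k * ((N * M.adjugate) k i * (M * N.adjugate) i k) := by
    refine Finset.sum_congr rfl fun i _ => ?_
    rw [Finset.sum_comm]
    refine Finset.sum_congr rfl fun k _ => ?_
    rw [Matrix.mul_apply (M := N), Finset.sum_mul, Finset.mul_sum]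
    exact Finset.sum_congr rfl fun j _ => by ring
  have adjugate_collapse (j k : ι) :
      ∑ i, M.adjugate j i * (M * N.adjugate) i k = M.det * N.adjugate j k := by
    rw [← Matrix.mul_apply, ← Matrix.mul_assoc, Matrix.adjugate_mul]
    simp
  have row_column_part : ∑ i, ∑ j, ∑ k, M.adjugate j i * (δ k j * N k j * (M * N.adjugate) i k)
      = M.det * ∑ k, ∑ j, δ k j * (N.adjugate j k * N k j) := by
    calc ∑ i, ∑ j, ∑ k, M.adjugate j i * (δ k j * N k j * (M * N.adjugate) i k)
        = ∑ k, ∑ j, δ k j * N k j * ∑ i, M.adjugate j i * (M * N.adjugate) i k := by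
          rw [Finset.sum_comm_cycle]
          simp only [Finset.mul_sum]
          refine Finset.sum_congr rfl fun k _ => ?_
          rw [Finset.sum_comm]
          exact Finset.sum_congr rfl fun j _ => Finset.sum_congr rfl fun i _ => by ring
      _ = M.det * ∑ k, ∑ j, δ k j * (N.adjugate j k * N k j) := by
          simp only [adjugate_collapse, Finset.mul_sum]
          exact Finset.sum_congr rfl fun k _ => Finset.sum_congr rfl fun j _ => by ring
  rw [← row_row_part, ← row_column_part]
  simp only [Finset.mul_sum, ← Finset.sum_add_distrib, mul_add]
  refine Finset.sum_congr rfl fun i _ => Finset.sum_congr rfl fun j _ => ?_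
  congr 1
  · exact Finset.sum_congr rfl fun k _ => by ring
  · ring

end MatrixIdentities

section LinkingNumber

lemma sgnQ_zero : sgnQ 0 = 0 := by simp [sgnQ]

lemma sgnQ_of_pos {a : ℝ} (ha : 0 < a) : sgnQ a = 1 := by
  simp [sgnQ, ha.not_gt, ha.ne']

lemma sgnQ_of_neg {a : ℝ} (ha : a < 0) : sgnQ a = -1 := by
  simp [sgnQ, ha]

lemma sgnQ_sub_comm (a b : ℝ) : sgnQ (a - b) = -sgnQ (b - a) := by
  rcases lt_trichotomy a b with h | rfl | h
  · rw [sgnQ_of_neg (sub_neg.mpr h), sgnQ_of_pos (sub_pos.mpr h)]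
  · rw [sub_self, sgnQ_zero, neg_zero]
  · rw [sgnQ_of_pos (sub_pos.mpr h), sgnQ_of_neg (sub_neg.mpr h), neg_neg]

lemma sgnQ_mul_sgnQ_mul_sgnQ (a b c : ℝ) :
    sgnQ (a - b) * sgnQ (a - c) * sgnQ (c - b)
      = sgnQ (b - a) + sgnQ (c - b) + sgnQ (a - c) := by
  rw [sgnQ_sub_comm b a]
  unfold sgnQ
  split_ifs <;> grind

lemma linkingAt_eq_sum (o r x s y : Circle1) :
    linkingAt o r x s y = (1 / 2) *
      (sgnQ (coordAt o s - coordAt o r) + sgnQ (coordAt o y - coordAt o x)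
        + sgnQ (coordAt o r - coordAt o y) + sgnQ (coordAt o x - coordAt o s)) := by
  rw [linkingAt, sgnQ_mul_sgnQ_mul_sgnQ, sgnQ_mul_sgnQ_mul_sgnQ,
    sgnQ_sub_comm (coordAt o r) (coordAt o s), sgnQ_sub_comm (coordAt o s) (coordAt o x)]
  ring

lemma coordAt_mem_Ico (o p : Circle1) : coordAt o p ∈ Set.Ico (0 : ℝ) 1 := by
  simpa [coordAt] using ((AddCircle.equivIco 1 0) (p - o)).2

lemma abs_coordAt_sub_lt_one (o p q : Circle1) : |coordAt o p - coordAt o q| < 1 := by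
  obtain ⟨hp0, hp1⟩ := coordAt_mem_Ico o p
  obtain ⟨hq0, hq1⟩ := coordAt_mem_Ico o q
  exact abs_sub_lt_iff.mpr ⟨by linarith, by linarith⟩

lemma coe_coordAt (o p : Circle1) : (coordAt o p : Circle1) = p - o :=
  AddCircle.coe_equivIco

lemma exists_coordAt_eq_sub_intCast (o o' p : Circle1) :
    ∃ k : ℤ, coordAt o' p = coordAt o p + coordAt o' o - k := by
  have hzero : ((coordAt o p + coordAt o' o - coordAt o' p : ℝ) : Circle1) = 0 := by
    rw [AddCircle.coe_sub, AddCircle.coe_add, coe_coordAt, coe_coordAt, coe_coordAt]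
    abel
  obtain ⟨k, hk⟩ := (AddCircle.coe_eq_zero_iff 1).mp hzero
  rw [zsmul_one] at hk
  exact ⟨k, by linarith⟩

lemma sgnQ_sub_intCast {d : ℝ} {k : ℤ} (hd : |d| < 1) (hdk : |d - k| < 1) :
    sgnQ (d - k) = sgnQ d - 2 * k := by
  rw [abs_lt] at hd hdk
  have hk_lower : (-2 : ℤ) < k := by exact_mod_cast (by linarith : (-2 : ℝ) < k)
  have hk_upper : k < (2 : ℤ) := by exact_mod_cast (by linarith : (k : ℝ) < 2)
  obtain rfl | rfl | rfl : k = -1 ∨ k = 0 ∨ k = 1 := by lia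
  · push_cast at hdk ⊢
    rw [sgnQ_of_pos (by linarith), sgnQ_of_neg (by linarith)]
    norm_num
  · simp
  · push_cast at hdk ⊢
    rw [sgnQ_of_neg (by linarith), sgnQ_of_pos (by linarith)]
    norm_num

-- Moving the cut point changes the sign cocycle by a coboundary.
lemma exists_sgnQ_coordAt_sub_eq (o o' : Circle1) :
    ∃ ε : Circle1 → ℚ, ∀ p q, sgnQ (coordAt o' p - coordAt o' q)
      = sgnQ (coordAt o p - coordAt o q) - 2 * (ε p - ε q) := by
  choose k hk using exists_coordAt_eq_sub_intCast o o'
  refine ⟨fun p => k p, fun p q => ?_⟩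
  have hdiff : coordAt o' p - coordAt o' q
      = coordAt o p - coordAt o q - ((k p - k q : ℤ) : ℝ) := by
    rw [hk p, hk q]
    push_cast
    ring
  rw [hdiff, sgnQ_sub_intCast (abs_coordAt_sub_lt_one o p q)
    (hdiff ▸ abs_coordAt_sub_lt_one o' p q)]
  push_cast
  rfl

lemma linkQ_eq_sum (o r x s y : Circle1) :
    linkQ r x s y = (1 / 2) *
      (sgnQ (coordAt o s - coordAt o r) + sgnQ (coordAt o y - coordAt o x)
        + sgnQ (coordAt o r - coordAt o y) + sgnQ (coordAt o x - coordAt o s)) := by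
  obtain ⟨ε, hε⟩ := exists_sgnQ_coordAt_sub_eq o (exists_cut r x s y).choose
  rw [linkQ, linkingAt_eq_sum, hε, hε, hε, hε]
  ring

lemma linkQ_self_left (r s y : Circle1) : linkQ r r s y = 0 := by
  rw [linkQ_eq_sum 0, sgnQ_sub_comm (coordAt 0 s), sgnQ_sub_comm (coordAt 0 y)]
  ring

lemma linkQ_self_right (r x s : Circle1) : linkQ r x s s = 0 := by
  rw [linkQ_eq_sum 0, sgnQ_sub_comm (coordAt 0 s) (coordAt 0 r),
    sgnQ_sub_comm (coordAt 0 s) (coordAt 0 x)]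
  ring

variable (K : Type*) [Field K]

/-- Half of the sign of the difference of the coordinates of `p` and `q` seen from the cut point
`o`. The linking number of two chords is the sum of four such terms, one for each pair made of an
end point of the first chord and an end point of the second. -/
def halfSign (o p q : Circle1) : K := (sgnQ (coordAt o p - coordAt o q) : K) / 2

lemma halfSign_self (o p : Circle1) : halfSign K o p p = 0 := by
  simp [halfSign, sgnQ_zero]

lemma halfSign_comm (o p q : Circle1) : halfSign K o p q = -halfSign K o q p := by
  rw [halfSign, sgnQ_sub_comm, Rat.cast_neg, neg_div, halfSign]

variable {K} in
lemma halfSign_of_lt {o p q : Circle1} (h : coordAt o p < coordAt o q) :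
    halfSign K o p q = -1 / 2 := by
  simp [halfSign, sgnQ_of_neg (sub_neg.mpr h)]

lemma linkQ_cast_eq_sum [CharZero K] (o r x s y : Circle1) :
    (linkQ r x s y : K)
      = halfSign K o s r + halfSign K o y x + halfSign K o r y + halfSign K o x s := by
  rw [linkQ_eq_sum o]
  simp only [halfSign]
  push_cast
  ring

end LinkingNumber

section SwappingBracket

variable (K : Type) [Field K] (P : Set Circle1)

lemma gen_self (p : P) : gen K P p p = 0 := by simp [gen]

variable {P} in
lemma gen_of_ne {p q : P} (h : p ≠ q) : gen K P p q = X ⟨(p, q), h⟩ := by simp [gen, h]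

lemma swapBr_gen_gen (r x s y : P) :
    swapBr K P 1 0 (gen K P r x) (gen K P s y)
      = C (linkQ r x s y : K) * (gen K P r y * gen K P s x) := by
  rcases eq_or_ne r x with rfl | hrx
  · simp [swapBr, gen_self, linkQ_self_left]
  rcases eq_or_ne s y with rfl | hsy
  · simp [swapBr, gen_self, gen_of_ne K hrx, linkQ_self_right]
  rw [gen_of_ne K hrx, gen_of_ne K hsy, swapBr, mkDerivation_X, mkDerivation_X]
  simp [genBr, smul_eq_C_mul]

variable {K P} {ι : Type*} [Fintype ι] [DecidableEq ι]

lemma swapBr_det_left (c1 c2 : K) (M : Matrix ι ι (SwapRing K P)) (b : SwapRing K P) :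
    swapBr K P c1 c2 M.det b = ∑ i, ∑ j, M.adjugate j i * swapBr K P c1 c2 (M i j) b :=
  derivation_det _ M

lemma swapBr_det_right (c1 c2 : K) (a : SwapRing K P) (N : Matrix ι ι (SwapRing K P)) :
    swapBr K P c1 c2 a N.det = ∑ k, ∑ l, N.adjugate l k * swapBr K P c1 c2 a (N k l) := by
  let bracketWith (b : SwapRing K P) : Derivation K (SwapRing K P) (SwapRing K P) :=
    mkDerivation K fun g => mkDerivation K (genBr K P c1 c2 g) b
  have apply_sum (a : SwapRing K P) : (∑ k, ∑ l, N.adjugate l k • bracketWith (N k l)) a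
      = ∑ k, ∑ l, N.adjugate l k * bracketWith (N k l) a := by
    simp only [← Derivation.coeFnAddMonoidHom_apply, map_sum, Finset.sum_apply]
    rfl
  have bracketWith_det : bracketWith N.det = ∑ k, ∑ l, N.adjugate l k • bracketWith (N k l) := by
    refine derivation_ext fun g => ?_
    simp only [apply_sum, bracketWith, mkDerivation_X, derivation_det]
  exact (DFunLike.congr_fun bracketWith_det a).trans (apply_sum a)

/-- The matrix of generators `(x_i y_j)`, whose determinant is `Δ((x_i), (y_j))`. -/
def genMatrix (K : Type) [Field K] {P : Set Circle1} (xs ys : ι → P) :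
    Matrix ι ι (SwapRing K P) :=
  Matrix.of fun i j => gen K P (xs i) (ys j)

lemma swapBr_gen_det [CharZero K] (o : Circle1) (r : P) (S v : ι → P) (j : ι) :
    swapBr K P 1 0 (gen K P r (v j)) (genMatrix K S v).det
      = ∑ k, (C (halfSign K o (S k) r) + C (halfSign K o (v j) (S k))) * genMatrix K S v k j *
          Matrix.vecMul (fun l => gen K P r (v l)) (genMatrix K S v).adjugate k
        + C (halfSign K o r (v j)) * gen K P r (v j) * (genMatrix K S v).det := by
  have link_split (k l : ι) : (C (linkQ r (v j) (S k) (v l) : K) : SwapRing K P)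
      = (C (halfSign K o (S k) r) + C (halfSign K o (v j) (S k)))
        + (C (halfSign K o (v l) (v j)) + C (halfSign K o r (v l))) := by
    rw [linkQ_cast_eq_sum K o]
    simp only [C_add]
    ring
  calc swapBr K P 1 0 (gen K P r (v j)) (genMatrix K S v).det
      = ∑ k, ∑ l, (genMatrix K S v).adjugate l k *
          (((C (halfSign K o (S k) r) + C (halfSign K o (v j) (S k)))
            + (C (halfSign K o (v l) (v j)) + C (halfSign K o r (v l)))) *
            (gen K P r (v l) * genMatrix K S v k j)) := by
        simp only [swapBr_det_right, genMatrix, Matrix.of_apply, swapBr_gen_gen, link_split]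
    _ = _ := by
        rw [sum_adjugate_mul_weight, halfSign_self, C_0, zero_add]

/-- The part of the bracket of `Δ(R, v)` and `Δ(S, v)` coming from the relative position of the
points of `R` and `S`. The entry `(N * M.adjugate) k i` is the determinant of `M` with its row `i`
replaced by the row `k` of `N`, so each term exchanges the points `R i` and `S k`. -/
def exchangeSum (K : Type) [Field K] {P : Set Circle1} (o : Circle1) (R S v : ι → P) :
    SwapRing K P :=
  ∑ i, ∑ k, C (halfSign K o (S k) (R i)) *
    ((genMatrix K S v * (genMatrix K R v).adjugate) k i *
      (genMatrix K R v * (genMatrix K S v).adjugate) i k)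

/-- The part of the bracket of `Δ(R, v)` with another determinant `Δ(S, v)` coming from the
relative position of the points of `R` and `v`, with the factor `Δ(S, v)` removed. -/
def pairingSum (K : Type) [Field K] {P : Set Circle1} (o : Circle1) (R v : ι → P) :
    SwapRing K P :=
  ∑ i, ∑ j, C (halfSign K o (R i) (v j)) *
    ((genMatrix K R v).adjugate j i * genMatrix K R v i j)

lemma swapBr_det_det [CharZero K] (o : Circle1) (R S v : ι → P) :
    swapBr K P 1 0 (genMatrix K R v).det (genMatrix K S v).det
      = exchangeSum K o R S v + (genMatrix K S v).det * pairingSum K o R v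
        - (genMatrix K R v).det * pairingSum K o S v := by
  have pairingSum_flipped : ∑ k, ∑ j, C (halfSign K o (v j) (S k)) *
      ((genMatrix K S v).adjugate j k * genMatrix K S v k j) = -pairingSum K o S v := by
    simp only [pairingSum, halfSign_comm K o (v _) _, C_neg, neg_mul, Finset.sum_neg_distrib]
  have entry_bracket (i j : ι) :
      swapBr K P 1 0 (genMatrix K R v i j) (genMatrix K S v).det
        = ∑ k, (C (halfSign K o (S k) (R i)) + C (halfSign K o (v j) (S k))) *
            genMatrix K S v k j * (genMatrix K R v * (genMatrix K S v).adjugate) i k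
          + C (halfSign K o (R i) (v j)) * genMatrix K R v i j * (genMatrix K S v).det :=
    swapBr_gen_det o (R i) S v j
  simp only [swapBr_det_left, entry_bracket]
  rw [sum_adjugate_mul_exchange _ _ (fun i k => C (halfSign K o (S k) (R i)))
      (fun k j => C (halfSign K o (v j) (S k))) (fun i j => C (halfSign K o (R i) (v j))),
    pairingSum_flipped]
  simp only [exchangeSum, pairingSum]
  ring

lemma exchangeSum_comm (o : Circle1) (R S v : ι → P) :
    exchangeSum K o R S v = -exchangeSum K o S R v := by
  rw [exchangeSum, Finset.sum_comm]
  simp only [exchangeSum, ← Finset.sum_neg_distrib]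
  refine Finset.sum_congr rfl fun k _ => Finset.sum_congr rfl fun i _ => ?_
  rw [halfSign_comm, C_neg]
  ring

lemma swapBr_det_det_comm [CharZero K] (R S v : ι → P) :
    swapBr K P 1 0 (genMatrix K R v).det (genMatrix K S v).det
      = -swapBr K P 1 0 (genMatrix K S v).det (genMatrix K R v).det := by
  rw [swapBr_det_det 0, swapBr_det_det 0, exchangeSum_comm]
  ring

-- Exchanging two points creates a repeated row as soon as one of them occurs elsewhere in the
-- other tuple; Cramer's rule sums the remaining exchanges with a common weight.
lemma exchangeSum_eq_of_halfSign_eq (o : Circle1) (R S v : ι → P) (f : ι → K)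
    (hf : ∀ i k, (∀ i', R i' = S k → i' = i) → (∀ k', S k' = R i → k' = k) →
      halfSign K o (S k) (R i) = f k) :
    exchangeSum K o R S v
      = C (∑ k, f k) * ((genMatrix K R v).det * (genMatrix K S v).det) := by
  have row_eq {R S : ι → P} {i k : ι} (h : R i = S k) : genMatrix K S v k = genMatrix K R v i := by
    ext1 j
    simp only [genMatrix, Matrix.of_apply, h]
  have weight_eq (i k : ι) : C (halfSign K o (S k) (R i)) *
      ((genMatrix K S v * (genMatrix K R v).adjugate) k i *
        (genMatrix K R v * (genMatrix K S v).adjugate) i k)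
      = C (f k) * ((genMatrix K S v * (genMatrix K R v).adjugate) k i *
        (genMatrix K R v * (genMatrix K S v).adjugate) i k) := by
    by_cases hR : ∀ i', R i' = S k → i' = i
    · by_cases hS : ∀ k', S k' = R i → k' = k
      · rw [hf i k hR hS]
      · push Not at hS
        obtain ⟨k', hk', hne⟩ := hS
        rw [mul_adjugate_apply_eq_zero hne (row_eq hk'), mul_zero, mul_zero, mul_zero]
    · push Not at hR
      obtain ⟨i', hi', hne⟩ := hR
      rw [mul_adjugate_apply_eq_zero hne (row_eq hi'), zero_mul, mul_zero, mul_zero]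
  rw [exchangeSum, Finset.sum_comm, map_sum, Finset.sum_mul]
  refine Finset.sum_congr rfl fun k _ => ?_
  simp only [weight_eq, ← Finset.mul_sum, sum_mul_adjugate_mul_mul_adjugate]

end SwappingBracket

section EdgeTuple

/-- The tuple `(x^a, z^{n-a-1}, w)` of left points of the determinants in
`E(x^a, z^{n-a-1} | y, t)`, where `w` is `y` or `t`. It has this shape only for `a < n`. -/
def edgeTuple {α : Type*} (n : ℕ) (x z : ℕ → α) (a : ℕ) (w : α) : Fin n → α :=
  rows3s x z x a (n - a - 1) w

variable {α : Type*} {n a : ℕ} {i : Fin n}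

lemma edgeTuple_of_lt (x z : ℕ → α) (w : α) (hia : (i : ℕ) < a) : edgeTuple n x z a w i = x i := by
  rw [edgeTuple, rows3s, if_pos hia]

lemma edgeTuple_of_le_of_lt (x z : ℕ → α) (w : α) (hai : a ≤ i) (hi : (i : ℕ) + 1 < n) :
    edgeTuple n x z a w i = z (i - a) := by
  rw [edgeTuple, rows3s, if_neg hai.not_gt, if_pos (by omega)]

lemma edgeTuple_last (x z : ℕ → α) (w : α) (ha : a < n) (hi : (i : ℕ) + 1 = n) :
    edgeTuple n x z a w i = w := by
  rw [edgeTuple, rows3s, if_neg (by omega), if_neg (by omega), if_neg (by omega)]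

end EdgeTuple

section QuadOrder

/-- Seen from the cut point `o`, all points `x 0, …, x (n - 2)` come before `y`, which comes before
all points `z 0, …, z (n - 2)`, which come before `t`. The order inside the two blocks is free. -/
structure QuadOrder {P : Set Circle1} (o : Circle1) (n : ℕ) (x z : ℕ → P) (y t : P) : Prop where
  x_lt_y : ∀ i, i + 1 < n → coordAt o (x i) < coordAt o y
  y_lt_z : ∀ i, i + 1 < n → coordAt o y < coordAt o (z i)
  z_lt_t : ∀ i, i + 1 < n → coordAt o (z i) < coordAt o t
  y_lt_t : coordAt o y < coordAt o t

variable {K : Type} [Field K] {P : Set Circle1} {o : Circle1} {n a b : ℕ} {x z : ℕ → P}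
  {y t w w' : P} {i k : Fin n}

lemma coordAt_lt_coordAt_edgeTuple (h : QuadOrder o n x z y t) (ha : a < n) (hw : w = y ∨ w = t)
    {j : ℕ} (hj : j + 1 < n) (hai : a ≤ i) :
    coordAt o (x j) < coordAt o (edgeTuple n x z a w i : P) := by
  have x_lt_y := h.x_lt_y j hj
  rcases Nat.lt_or_eq_of_le (Nat.succ_le_of_lt i.isLt) with hi | hi
  · rw [edgeTuple_of_le_of_lt x z w hai hi]
    exact x_lt_y.trans (h.y_lt_z _ (by omega))
  · rw [edgeTuple_last x z w ha hi]
    rcases hw with rfl | rfl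
    exacts [x_lt_y, x_lt_y.trans h.y_lt_t]

lemma coordAt_edgeTuple_between (h : QuadOrder o n x z y t) (ha : a < n) (hai : a ≤ i) :
    coordAt o y < coordAt o (edgeTuple n x z a t i : P) ∧
      coordAt o (edgeTuple n x z a y i : P) < coordAt o t := by
  rcases Nat.lt_or_eq_of_le (Nat.succ_le_of_lt i.isLt) with hi | hi
  · simp only [edgeTuple_of_le_of_lt x z _ hai hi]
    exact ⟨h.y_lt_z _ (by omega), h.z_lt_t _ (by omega)⟩
  · simp only [edgeTuple_last x z _ ha hi]
    exact ⟨h.y_lt_t, h.y_lt_t⟩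

variable (K)

lemma halfSign_edgeTuple_of_ne (h : QuadOrder o n x z y t) (ha : a < n)
    (hw : w = y ∨ w = t) (hw' : w' = y ∨ w' = t) (hne : w ≠ w') (hai : a ≤ i) :
    halfSign K o w' (edgeTuple n x z a w i : P) = halfSign K o w' y - halfSign K o w y := by
  obtain ⟨y_lt, lt_t⟩ := coordAt_edgeTuple_between h ha hai
  rcases hw with rfl | rfl <;> rcases hw' with rfl | rfl
  · exact absurd rfl hne
  · rw [halfSign_comm, halfSign_of_lt lt_t, halfSign_comm K o w' w,
      halfSign_of_lt h.y_lt_t, halfSign_self, sub_zero]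
  · rw [halfSign_of_lt y_lt, halfSign_self, halfSign_comm K o w w',
      halfSign_of_lt h.y_lt_t, zero_sub, neg_neg]
  · exact absurd rfl hne

lemma halfSign_edgeTuple_edgeTuple (h : QuadOrder o n x z y t) (hab : a ≤ b) (hb : b < n)
    (hw : w = y ∨ w = t) (hw' : w' = y ∨ w' = t)
    (hR : ∀ i', edgeTuple n x z a w i' = edgeTuple n x z b w' k → i' = i)
    (hS : ∀ k', edgeTuple n x z b w' k' = edgeTuple n x z a w i → k' = k) :
    halfSign K o (edgeTuple n x z b w' k : P) (edgeTuple n x z a w i : P)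
      = (if a ≤ k ∧ (k : ℕ) < b then -1 / 2 else 0)
        + if (k : ℕ) + 1 = n then halfSign K o w' y - halfSign K o w y else 0 := by
  have agree_on_x {l : Fin n} (hl : (l : ℕ) < a) :
      edgeTuple n x z a w l = edgeTuple n x z b w' l := by
    rw [edgeTuple_of_lt x z w hl, edgeTuple_of_lt x z w' (hl.trans_le hab)]
  have a_le_of_a_le (hk : a ≤ k) : a ≤ i := by
    by_contra! hi
    exact hi.not_ge (hS i (agree_on_x hi).symm ▸ hk)
  have eq_zero_of_common {l : Fin n} (hl : edgeTuple n x z a w l = edgeTuple n x z b w' k) :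
      halfSign K o (edgeTuple n x z b w' k : P) (edgeTuple n x z a w i : P) = 0 := by
    rw [← hR l hl, hl, halfSign_self]
  rcases lt_or_ge (k : ℕ) a with hka | hak
  · rw [eq_zero_of_common (agree_on_x hka), if_neg (by omega), if_neg (by omega), add_zero]
  rcases lt_or_ge (k : ℕ) b with hkb | hbk
  · rw [if_pos ⟨hak, hkb⟩, if_neg (by omega), add_zero, edgeTuple_of_lt x z w' hkb]
    exact halfSign_of_lt
      (coordAt_lt_coordAt_edgeTuple h (hab.trans_lt hb) hw (by omega) (a_le_of_a_le hak))
  rw [if_neg (by omega), zero_add]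
  rcases Nat.lt_or_eq_of_le (Nat.succ_le_of_lt k.isLt) with hk | hk
  · let l : Fin n := ⟨k - b + a, by omega⟩
    have shift : edgeTuple n x z a w l = edgeTuple n x z b w' k := by
      rw [edgeTuple_of_le_of_lt x z w' hbk hk, edgeTuple_of_le_of_lt x z w
        (Nat.le_add_left _ _) (by dsimp only [l]; omega), Nat.add_sub_cancel]
    rw [eq_zero_of_common shift, if_neg (by omega)]
  rw [if_pos hk]
  rcases eq_or_ne w w' with rfl | hne
  · rw [sub_self, eq_zero_of_common (l := k)]
    rw [edgeTuple_last x z w (hab.trans_lt hb) hk, edgeTuple_last x z w hb hk]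
  · rw [edgeTuple_last x z w' hb hk]
    exact halfSign_edgeTuple_of_ne K h (hab.trans_lt hb) hw hw' hne (a_le_of_a_le hak)

lemma exchangeSum_edgeTuple (h : QuadOrder o n x z y t) (hab : a ≤ b) (hb : b < n)
    (hw : w = y ∨ w = t) (hw' : w' = y ∨ w' = t) (v : Fin n → P) :
    exchangeSum K o (edgeTuple n x z a w) (edgeTuple n x z b w') v
      = C ((∑ k : Fin n, if a ≤ k ∧ (k : ℕ) < b then -1 / 2 else 0)
          + (halfSign K o w' y - halfSign K o w y)) *
        (Dmat K P n (edgeTuple n x z a w) v * Dmat K P n (edgeTuple n x z b w') v) := by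
  have sum_last (δ : K) : ∑ k : Fin n, (if (k : ℕ) + 1 = n then δ else 0) = δ := by
    have n_eq : n = n - 1 + 1 := by omega
    rw [Fin.sum_univ_eq_sum_range (fun k => if k + 1 = n then δ else 0) n, n_eq]
    simp
  rw [← sum_last (halfSign K o w' y - halfSign K o w y), ← Finset.sum_add_distrib]
  exact exchangeSum_eq_of_halfSign_eq o _ _ v _
    fun i k hR hS => halfSign_edgeTuple_edgeTuple K h hab hb hw hw' hR hS

end QuadOrder

section DeterminantQuotients

lemma bracket_mul_mul_eq_zero {A : Type*} [CommRing A] {B : A → A → A}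
    (leibniz_left : ∀ a b c, B (a * b) c = a * B b c + b * B a c)
    (leibniz_right : ∀ a b c, B a (b * c) = b * B a c + c * B a b) {a a' b b' : A}
    (hab : B a b = 0) (hab' : B a b' = 0) (ha'b : B a' b = 0) (ha'b' : B a' b' = 0) :
    B (a * a') (b * b') = 0 := by
  simp only [leibniz_left, leibniz_right, hab, hab', ha'b, ha'b', mul_zero, add_zero]

lemma bracket_quotient_eq_zero {A ι : Type*} [CommRing A] {B : A → A → A}
    (leibniz_left : ∀ a b c, B (a * b) c = a * B b c + b * B a c)
    (leibniz_right : ∀ a b c, B a (b * c) = b * B a c + c * B a b)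
    {D F u u' : ι → A} {s : Set ι}
    (hB : ∀ p ∈ s, ∀ q ∈ s, B (D p) (F q) = u p * F q + D p * u' q)
    {p q p' q' : ι} (hp : p ∈ s) (hq : q ∈ s) (hp' : p' ∈ s) (hq' : q' ∈ s)
    (hDq : IsUnit (D q)) (hFq' : IsUnit (F q')) {E G : A}
    (hE : E * D q = D p) (hG : G * F q' = F p') : B E G = 0 := by
  have bracket_E (g : A) : D q * B E g = B (D p) g - E * B (D q) g := by
    rw [← hE, leibniz_left]
    ring
  have bracket_G (f : A) : F q' * B f G = B f (F p') - G * B f (F q') := by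
    rw [← hG, leibniz_right]
    ring
  have cleared : D q * (F q' * B E G) = 0 := by
    rw [mul_left_comm, bracket_E, mul_sub, bracket_G, mul_left_comm, bracket_G, hB p hp p' hp',
      hB p hp q' hq', hB q hq p' hp', hB q hq q' hq', ← hE, ← hG]
    ring
  rwa [hDq.mul_right_eq_zero, hFq'.mul_right_eq_zero] at cleared

variable {K : Type} [Field K] {P : Set Circle1} {o : Circle1} {n a b : ℕ} {x z : ℕ → P} {y t : P}

lemma isUnit_toQn_of_mem_nonZeroDivisors {D : SwapRing K P}
    (h : toZn K P n D ∈ nonZeroDivisors (ZnRing K P n)) : IsUnit (toQn K P n D) :=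
  IsLocalization.map_units (QnRing K P n) ⟨toZn K P n D, h⟩

lemma EQuot_mul_toQn (R S v : Fin n → P)
    (h : toZn K P n (Dmat K P n S v) ∈ nonZeroDivisors (ZnRing K P n)) :
    EQuot K P n R S v h * toQn K P n (Dmat K P n S v) = toQn K P n (Dmat K P n R v) := by
  rw [EQuot, Localization.mk_eq_mk']
  exact IsLocalization.mk'_spec _ _ _

variable [CharZero K]

lemma exists_swapBr_edgeTuple_eq_of_le (h : QuadOrder o n x z y t) (hab : a ≤ b) (hb : b < n)
    (v : Fin n → P) :
    ∃ u u' : P → SwapRing K P, ∀ w ∈ ({y, t} : Set P), ∀ w' ∈ ({y, t} : Set P),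
      swapBr K P 1 0 (Dmat K P n (edgeTuple n x z a w) v) (Dmat K P n (edgeTuple n x z b w') v)
        = u w * Dmat K P n (edgeTuple n x z b w') v
          + Dmat K P n (edgeTuple n x z a w) v * u' w' := by
  let c : K := ∑ k : Fin n, if a ≤ k ∧ (k : ℕ) < b then -1 / 2 else 0
  refine ⟨fun w => pairingSum K o (edgeTuple n x z a w) v
      + C (c - halfSign K o w y) * Dmat K P n (edgeTuple n x z a w) v,
    fun w' => C (halfSign K o w' y) * Dmat K P n (edgeTuple n x z b w') v
      - pairingSum K o (edgeTuple n x z b w') v, fun w hw w' hw' => ?_⟩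
  refine (swapBr_det_det o _ _ v).trans ?_
  rw [exchangeSum_edgeTuple K h hab hb hw hw']
  simp only [Dmat, genMatrix, c, C_add, C_sub]
  ring

lemma exists_swapBr_edgeTuple_eq (h : QuadOrder o n x z y t) (ha : a < n) (hb : b < n)
    (v : Fin n → P) :
    ∃ u u' : P → SwapRing K P, ∀ w ∈ ({y, t} : Set P), ∀ w' ∈ ({y, t} : Set P),
      swapBr K P 1 0 (Dmat K P n (edgeTuple n x z a w) v) (Dmat K P n (edgeTuple n x z b w') v)
        = u w * Dmat K P n (edgeTuple n x z b w') v
          + Dmat K P n (edgeTuple n x z a w) v * u' w' := by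
  rcases le_total a b with hab | hba
  · exact exists_swapBr_edgeTuple_eq_of_le h hab hb v
  · obtain ⟨u, u', hu⟩ := exists_swapBr_edgeTuple_eq_of_le (K := K) h hba ha v
    refine ⟨-u', -u, fun w hw w' hw' => ?_⟩
    refine (swapBr_det_det_comm _ _ v).trans ?_
    refine (congrArg Neg.neg (hu w' hw' w hw)).trans ?_
    simp only [Pi.neg_apply]
    ring

lemma bracket_EQuot_edgeTuple_eq_zero (h : QuadOrder o n x z y t)
    {Bq : QnRing K P n → QnRing K P n → QnRing K P n} (hBq : IsQnBracket K P n 1 0 Bq)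
    (ha : a < n) (hb : b < n) (v : Fin n → P) {p q p' q' : P} (hp : p ∈ ({y, t} : Set P))
    (hq : q ∈ ({y, t} : Set P)) (hp' : p' ∈ ({y, t} : Set P)) (hq' : q' ∈ ({y, t} : Set P))
    (hDq : toZn K P n (Dmat K P n (edgeTuple n x z a q) v) ∈ nonZeroDivisors (ZnRing K P n))
    (hFq' : toZn K P n (Dmat K P n (edgeTuple n x z b q') v) ∈ nonZeroDivisors (ZnRing K P n)) :
    Bq (EQuot K P n (edgeTuple n x z a p) (edgeTuple n x z a q) v hDq)
      (EQuot K P n (edgeTuple n x z b p') (edgeTuple n x z b q') v hFq') = 0 := by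
  obtain ⟨bracket_toQn, leibniz_left, leibniz_right⟩ := hBq
  obtain ⟨u, u', hu⟩ := exists_swapBr_edgeTuple_eq (K := K) h ha hb v
  have separated : ∀ w ∈ ({y, t} : Set P), ∀ w' ∈ ({y, t} : Set P),
      Bq (toQn K P n (Dmat K P n (edgeTuple n x z a w) v))
          (toQn K P n (Dmat K P n (edgeTuple n x z b w') v))
        = toQn K P n (u w) * toQn K P n (Dmat K P n (edgeTuple n x z b w') v)
          + toQn K P n (Dmat K P n (edgeTuple n x z a w) v) * toQn K P n (u' w') :=
    fun w hw w' hw' => by rw [bracket_toQn, hu w hw w' hw', map_add, map_mul, map_mul]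
  exact bracket_quotient_eq_zero leibniz_left leibniz_right
    (D := fun w => toQn K P n (Dmat K P n (edgeTuple n x z a w) v))
    (F := fun w => toQn K P n (Dmat K P n (edgeTuple n x z b w) v)) separated hp hq hp' hq'
    (isUnit_toQn_of_mem_nonZeroDivisors hDq) (isUnit_toQn_of_mem_nonZeroDivisors hFq')
    (EQuot_mul_toQn _ _ v hDq) (EQuot_mul_toQn _ _ v hFq')

end DeterminantQuotients

lemma mem_descPts {f : ℕ → Circle1} {m i : ℕ} (hi : i < m) : f i ∈ descPts f m :=
  List.mem_reverse.mpr (List.mem_map_of_mem (List.mem_range.mpr hi))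

lemma exists_quadOrder_of_anticlockwiseList {P : Set Circle1} {n : ℕ} (hn : 2 ≤ n)
    {x y z t : ℕ → P} (hcfg : AnticlockwiseList
      (descPts (fun i => x i) (n - 1) ++ descPts (fun i => y i) (n - 1)
        ++ descPts (fun i => z i) (n - 1) ++ descPts (fun i => t i) (n - 1))) :
    ∃ o, QuadOrder o n x z (y 0) (t 0) := by
  obtain ⟨o, -, chain⟩ := hcfg
  have mem (f : ℕ → P) {i : ℕ} (hi : i + 1 < n) :
      (f i : Circle1) ∈ descPts (fun i => f i) (n - 1) :=
    mem_descPts (f := fun i => f i) (by omega)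
  have pairwise := List.pairwise_map.mp (List.isChain_iff_pairwise.mp chain)
  simp only [List.pairwise_append] at pairwise
  obtain ⟨⟨⟨-, -, x_lt_y⟩, -, xy_lt_z⟩, -, xyz_lt_t⟩ := pairwise
  exact ⟨o, fun i hi => x_lt_y _ (mem x hi) _ (mem y hn),
    fun i hi => xy_lt_z _ (List.mem_append_right _ (mem y hn)) _ (mem z hi),
    fun i hi => xyz_lt_t _ (List.mem_append_right _ (mem z hi)) _ (mem t hn),
    xyz_lt_t _ (List.mem_append_left _ (List.mem_append_right _ (mem y hn))) _ (mem t hn)⟩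

theorem edge_functions_commute_general {K : Type} [Field K] [CharZero K] {P : Set Circle1}
    {o : Circle1} {n : ℕ} (hn : 0 < n) {x z : ℕ → P} {y t : P}
    (h : QuadOrder o n x z y t)
    {Bq : QnRing K P n → QnRing K P n → QnRing K P n} (hBq : IsQnBracket K P n 1 0 Bq)
    (v : Fin n → P) :
    (∀ a b : ℕ, a ≤ n - 1 → b ≤ n - 1 →
      ∀ (h1 : toZn K P n (Dmat K P n (rows3s x z x a (n - a - 1) t) v)
            ∈ nonZeroDivisors (ZnRing K P n))
        (h2 : toZn K P n (Dmat K P n (rows3s x z x b (n - b - 1) t) v)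
            ∈ nonZeroDivisors (ZnRing K P n)),
        Bq (EQuot K P n (rows3s x z x a (n - a - 1) y) (rows3s x z x a (n - a - 1) t) v h1)
           (EQuot K P n (rows3s x z x b (n - b - 1) y) (rows3s x z x b (n - b - 1) t) v h2) = 0) ∧
    (∀ i j : ℕ, 1 ≤ i → i ≤ n - 1 → 1 ≤ j → j ≤ n - 1 →
      ∀ (hA1 : toZn K P n (Dmat K P n (rows3s x z x i (n - i - 1) y) v)
            ∈ nonZeroDivisors (ZnRing K P n))
        (hA2 : toZn K P n (Dmat K P n (rows3s x z x (i - 1) (n - i) t) v)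
            ∈ nonZeroDivisors (ZnRing K P n))
        (hB1 : toZn K P n (Dmat K P n (rows3s x z x j (n - j - 1) y) v)
            ∈ nonZeroDivisors (ZnRing K P n))
        (hB2 : toZn K P n (Dmat K P n (rows3s x z x (j - 1) (n - j) t) v)
            ∈ nonZeroDivisors (ZnRing K P n)),
        Bq (edgeQuot K P n x z t y i v hA1 hA2) (edgeQuot K P n x z t y j v hB1 hB2) = 0) := by
  have hy : y ∈ ({y, t} : Set P) := .inl rfl
  have ht : t ∈ ({y, t} : Set P) := .inr rfl
  have lt_n {l : ℕ} (hl : l ≤ n - 1) : l < n := (Nat.le_sub_one_iff_lt hn).mp hl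
  refine ⟨fun a b ha hb h1 h2 =>
    bracket_EQuot_edgeTuple_eq_zero h hBq (lt_n ha) (lt_n hb) v hy ht hy ht h1 h2, ?_⟩
  intro i j hi hi' hj hj' hA1 hA2 hB1 hB2
  obtain ⟨i, rfl⟩ := Nat.exists_eq_add_of_le' hi
  obtain ⟨j, rfl⟩ := Nat.exists_eq_add_of_le' hj
  have hin := Nat.lt_of_succ_lt (lt_n hi')
  have hjn := Nat.lt_of_succ_lt (lt_n hj')
  exact bracket_mul_mul_eq_zero (B := Bq) hBq.2.1 hBq.2.2
    (bracket_EQuot_edgeTuple_eq_zero h hBq (lt_n hi') (lt_n hj') v ht hy ht hy hA1 hB1)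
    (bracket_EQuot_edgeTuple_eq_zero h hBq (lt_n hi') hjn v ht hy hy ht hA1 hB2)
    (bracket_EQuot_edgeTuple_eq_zero h hBq hin (lt_n hj') v hy ht ht hy hA2 hB1)
    (bracket_EQuot_edgeTuple_eq_zero h hBq hin hjn v hy ht hy ht hA2 hB2)

/-- In the quadrilateral configuration
`x_{n-1} ≺ … ≺ x_1 ≺ y_{n-1} ≺ … ≺ y_1 ≺ z_{n-1} ≺ … ≺ z_1 ≺ t_{n-1} ≺ … ≺ t_1` of
pairwise distinct points of `P` ordered anticlockwise, for all `a, b ∈ {0, …, n-1}` the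
extended swapping bracket `{E(x^a, z^{n-a-1} | y_1, t_1), E(x^b, z^{n-b-1} | y_1, t_1)}`
vanishes; in particular the images `A_i = E(x^i, z^{n-i-1} | t_1, y_1) ·
E(x^{i-1}, z^{n-i} | y_1, t_1)` of the edge functions attached to the fixed edge `xz`
pairwise Poisson-commute. -/
theorem edge_functions_commute (K : Type) [Field K] [CharZero K]
    (P : Set Circle1) (n : ℕ) (hn : 2 ≤ n) (x y z t : ℕ → ↥P)
    (hcfg : AnticlockwiseList
      (descPts (fun i => ((x i : Circle1))) (n-1) ++ descPts (fun i => ((y i : Circle1))) (n-1)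
        ++ descPts (fun i => ((z i : Circle1))) (n-1)
        ++ descPts (fun i => ((t i : Circle1))) (n-1))) :
    ∀ Bq : QnRing K P n → QnRing K P n → QnRing K P n, IsQnBracket K P n 1 0 Bq →
    ∀ v : Fin n → ↥P, Function.Injective v →
    ((∀ a b : ℕ, a ≤ n-1 → b ≤ n-1 →
      ∀ (h1 : toZn K P n (Dmat K P n (rows3s x z x a (n-a-1) (t 0)) v)
            ∈ nonZeroDivisors (ZnRing K P n))
        (h2 : toZn K P n (Dmat K P n (rows3s x z x b (n-b-1) (t 0)) v)
            ∈ nonZeroDivisors (ZnRing K P n)),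
        Bq (EQuot K P n (rows3s x z x a (n-a-1) (y 0)) (rows3s x z x a (n-a-1) (t 0)) v h1)
           (EQuot K P n (rows3s x z x b (n-b-1) (y 0)) (rows3s x z x b (n-b-1) (t 0)) v h2)
          = 0) ∧
     (∀ i j : ℕ, 1 ≤ i → i ≤ n-1 → 1 ≤ j → j ≤ n-1 →
      ∀ (hA1 : toZn K P n (Dmat K P n (rows3s x z x i (n-i-1) (y 0)) v)
            ∈ nonZeroDivisors (ZnRing K P n))
        (hA2 : toZn K P n (Dmat K P n (rows3s x z x (i-1) (n-i) (t 0)) v)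
            ∈ nonZeroDivisors (ZnRing K P n))
        (hB1 : toZn K P n (Dmat K P n (rows3s x z x j (n-j-1) (y 0)) v)
            ∈ nonZeroDivisors (ZnRing K P n))
        (hB2 : toZn K P n (Dmat K P n (rows3s x z x (j-1) (n-j) (t 0)) v)
            ∈ nonZeroDivisors (ZnRing K P n)),
        Bq (edgeQuot K P n x z (t 0) (y 0) i v hA1 hA2)
           (edgeQuot K P n x z (t 0) (y 0) j v hB1 hB2) = 0)) := by
  obtain ⟨o, h⟩ := exists_quadOrder_of_anticlockwiseList hn hcfg
  exact fun Bq hBq v _ => edge_functions_commute_general (by omega) h hBq v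

end
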